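/- arXiv:2603.10288 — 2 statements merged into one kernel-verified Lean document; each statement's English description precedes it below -/
import Mathlib

section
/- Corollary 4.2. Let ℰ = (𝒳, Σ, {P_θ}_{θ∈Θ}) be a statistical model, μ a σ-finite measure on (𝒳,Σ) with P_θ ≪ μ for every θ, and T : 𝒳 → (𝒯,Σ_𝒯) measurable. Suppose (𝒳,Σ) is an analytic Borel space and (𝒯,Σ_𝒯) is separable. For each θ ∈ Θ choose a density f_θ of P_θ with respect to μ. If there exists a nonempty countable subset Θ₀ ⊆ Θ that is dense in Θ with respect to the total variation pseudometric d_ℰ such that for all x, y ∈ 𝒳 with T(x) = T(y) one has y ∈ D(x,Θ₀), then T is sufficient. -/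
open MeasureTheory

noncomputable section

universe u v w u'

/-- `f` is a (pointwise nonnegative, measurable) density of `P` w.r.t. `μ`,
i.e. a version of the Radon–Nikodym derivative `dP/dμ`. -/
def IsDensity {X : Type*} [MeasurableSpace X] (P μ : Measure X) (f : X → ℝ) : Prop :=
  Measurable f ∧ (∀ x, 0 ≤ f x) ∧ P = μ.withDensity (fun x => ENNReal.ofReal (f x))

/-- The proportionality set `D(x, Θ')` determined by a family of densities. -/
def DSet {X : Type*} {Θ : Type*} (f : Θ → X → ℝ) (x : X) (Θ' : Set Θ) : Set X :=
  {y | ∃ h : ℝ, 0 < h ∧ ∀ θ ∈ Θ', f θ y = f θ x * h}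

/-- A statistic `T` is sufficient for the model `{P θ}`. -/
def IsSufficientStat {X : Type u} [mX : MeasurableSpace X] {Θ : Type v}
    (P : Θ → Measure X) {T' : Type w} [mT : MeasurableSpace T'] (T : X → T') : Prop :=
  Measurable T ∧
  ∀ E : Set X, MeasurableSet E → ∃ κ : T' → ℝ, Measurable κ ∧
    ∀ θ : Θ, (P θ)[E.indicator (fun _ => (1 : ℝ)) | MeasurableSpace.comap T mT] =ᵐ[P θ] κ ∘ T

/-- A statistic `T` is minimal sufficient: it is sufficient and it factors
`P θ`-a.e. (for every `θ`) through every sufficient statistic via a measurable map. -/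
def IsMinimalSufficientStat {X : Type u} [mX : MeasurableSpace X] {Θ : Type v}
    (P : Θ → Measure X) {T' : Type w} [mT : MeasurableSpace T'] (T : X → T') : Prop :=
  IsSufficientStat P T ∧
  ∀ (S' : Type u') (mS : MeasurableSpace S') (S : X → S'),
    @IsSufficientStat X mX Θ P S' mS S →
      ∃ g : S' → T', @Measurable S' T' mS mT g ∧ ∀ θ : Θ, T =ᵐ[P θ] g ∘ S

/-- A measurable space is analytic Borel iff it is separable (countably generated with
measurable singletons) and it is the image of a standard Borel space under a surjective
measurable map. -/
def IsAnalyticBorel (X : Type u) [mX : MeasurableSpace X] : Prop :=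
  MeasurableSpace.CountablyGenerated X ∧ MeasurableSingletonClass X ∧
  ∃ (Y : Type u) (mY : MeasurableSpace Y), @StandardBorelSpace Y mY ∧
    ∃ g : Y → X, @Measurable Y X mY mX g ∧ Function.Surjective g

/-- A sub-σ-algebra `m ⊆ Σ` is sufficient for the model `{P θ}`. -/
def IsSufficientSubalgebra {X : Type u} [mX : MeasurableSpace X] {Θ : Type v}
    (P : Θ → Measure X) (m : MeasurableSpace X) : Prop :=
  m ≤ mX ∧ ∀ E : Set X, MeasurableSet[mX] E → ∃ κ : X → ℝ, Measurable[m] κ ∧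
    ∀ θ : Θ, (P θ)[E.indicator (fun _ => (1 : ℝ)) | m] =ᵐ[P θ] κ

/-- The collection `𝔑_ℰ` of measurable sets null under every `P θ`. -/
def modelNullSets {X : Type u} [mX : MeasurableSpace X] {Θ : Type v}
    (P : Θ → Measure X) : Set (Set X) :=
  {N | MeasurableSet N ∧ ∀ θ, P θ N = 0}

/-- The σ-algebra `𝔄̄^ℰ` generated by `𝔄 ∪ 𝔑_ℰ`. -/
def completionAlg {X : Type u} [mX : MeasurableSpace X] {Θ : Type v}
    (P : Θ → Measure X) (m : MeasurableSpace X) : MeasurableSpace X :=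
  MeasurableSpace.generateFrom ({s | MeasurableSet[m] s} ∪ @modelNullSets X mX Θ P)

/-- A sub-σ-algebra is minimal sufficient iff it is sufficient and contained in the
`𝔑_ℰ`-completion of every sufficient sub-σ-algebra. -/
def IsMinimalSufficientSubalgebra {X : Type u} [mX : MeasurableSpace X] {Θ : Type v}
    (P : Θ → Measure X) (m : MeasurableSpace X) : Prop :=
  @IsSufficientSubalgebra X mX Θ P m ∧
  ∀ m' : MeasurableSpace X, @IsSufficientSubalgebra X mX Θ P m' →
    m ≤ @completionAlg X mX Θ P m'

/-- The total variation distance `d_ℰ(θ₁, θ₂) = sup_{E ∈ Σ} |P θ₁ E - P θ₂ E|`. -/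
def tvDist {X : Type u} [MeasurableSpace X] {Θ : Type v} (P : Θ → Measure X)
    (θ₁ θ₂ : Θ) : ℝ :=
  ⨆ E : {E : Set X // MeasurableSet E}, |(P θ₁ E.1).toReal - (P θ₂ E.1).toReal|

/-- The coarsest topology `τ⟨ℰ⟩` on `Θ` making `θ ↦ P θ E` continuous for every `E ∈ Σ`. -/
def modelTopology {X : Type u} [MeasurableSpace X] {Θ : Type v} (P : Θ → Measure X) :
    TopologicalSpace Θ :=
  ⨅ E : {E : Set X // MeasurableSet E},
    TopologicalSpace.induced (fun θ => (P θ E.1).toReal) inferInstance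

/-- Saturated measurable functions on an analytic Borel space factor measurably through `T`. -/
theorem aux_factor {X : Type u} [mX : MeasurableSpace X] {T' : Type w} [mT : MeasurableSpace T']
    (hX : IsAnalyticBorel X)
    (hTcg : MeasurableSpace.CountablyGenerated T')
    (hTsing : MeasurableSingletonClass T')
    (T : X → T') (hT : Measurable T) (r : X → ENNReal) (hr : Measurable r)
    (hsat : ∀ x y, T x = T y → r x = r y) :
    ∃ ρ : T' → ENNReal, Measurable ρ ∧ r = ρ ∘ T := by
  obtain ⟨-, -, Y, mY, hY, g, hg, hgs⟩ := hX
  refine Measurable.exists_eq_measurable_comp (f := T) (g := r) ?_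
  intro B hB
  have hF : Measurable (T ∘ g) := hT.comp hg
  have h1 : (T ∘ g) ⁻¹' (T '' (r ⁻¹' B)) = g ⁻¹' (r ⁻¹' B) := by
    ext y
    constructor
    · rintro ⟨x, hx, hxy⟩
      have := hsat x (g y) hxy
      simpa [← this] using hx
    · intro hy
      exact ⟨g y, hy, rfl⟩
  have h2 : MeasurableSet ((T ∘ g) ⁻¹' (T '' (r ⁻¹' B))) := by
    rw [h1]; exact hg (hr hB)
  rw [hF.measurableSet_preimage_iff_preimage_val] at h2
  obtain ⟨S, hS, hSe⟩ := h2
  refine ⟨S, hS, ?_⟩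
  ext x
  obtain ⟨y, rfl⟩ := hgs x
  have h3 : (⟨T (g y), ⟨y, rfl⟩⟩ : Set.range (T ∘ g)) ∈ (Subtype.val ⁻¹' S : Set (Set.range (T ∘ g)))
      ↔ (⟨T (g y), ⟨y, rfl⟩⟩ : Set.range (T ∘ g)) ∈
        (Subtype.val ⁻¹' (T '' (r ⁻¹' B)) : Set (Set.range (T ∘ g))) := by rw [hSe]
  have h4 : y ∈ (T ∘ g) ⁻¹' (T '' (r ⁻¹' B)) ↔ y ∈ g ⁻¹' (r ⁻¹' B) := by rw [h1]
  exact h3.trans h4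

theorem aux_cmp {X : Type u} [mX : MeasurableSpace X] (P Q : Measure X) (ε : ENNReal)
    (h : ∀ A, MeasurableSet A → P A ≤ Q A + ε) (φ : X → ℝ) (hφ : Measurable φ)
    (h0 : ∀ x, 0 ≤ φ x) (h1 : ∀ x, φ x ≤ 1) :
    ∫⁻ x, ENNReal.ofReal (φ x) ∂P ≤ ∫⁻ x, ENNReal.ofReal (φ x) ∂Q + ε := by
  rw [lintegral_eq_lintegral_meas_lt P (Filter.Eventually.of_forall h0) hφ.aemeasurable,
    lintegral_eq_lintegral_meas_lt Q (Filter.Eventually.of_forall h0) hφ.aemeasurable]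
  calc ∫⁻ t in Set.Ioi (0:ℝ), P {a | t < φ a}
      ≤ ∫⁻ t in Set.Ioi (0:ℝ), (Q {a | t < φ a} + (Set.Ioc (0:ℝ) 1).indicator (fun _ => ε) t) := by
        refine setLIntegral_mono' measurableSet_Ioi fun t ht => ?_
        by_cases ht1 : t ≤ 1
        · rw [Set.indicator_of_mem (show t ∈ Set.Ioc (0:ℝ) 1 from ⟨ht, ht1⟩)]
          exact h _ (measurableSet_lt measurable_const hφ)
        · have : {a | t < φ a} = ∅ := by
            ext a; simp only [Set.mem_setOf_eq, Set.mem_empty_iff_false, iff_false, not_lt]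
            exact (h1 a).trans (le_of_not_ge ht1)
          rw [this]; simp
    _ = (∫⁻ t in Set.Ioi (0:ℝ), Q {a | t < φ a}) +
          ∫⁻ t in Set.Ioi (0:ℝ), (Set.Ioc (0:ℝ) 1).indicator (fun _ => ε) t := by
        exact lintegral_add_right _ (measurable_const.indicator measurableSet_Ioc)
    _ ≤ _ := by
        gcongr
        refine (setLIntegral_le_lintegral _ _).trans ?_
        rw [lintegral_indicator measurableSet_Ioc]
        simp

theorem aux_tv {X : Type u} [MeasurableSpace X] {Θ : Type v} (P : Θ → Measure X)
    (hP : ∀ θ, IsProbabilityMeasure (P θ)) (a b : Θ) (ε : ℝ) (h : tvDist P a b < ε)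
    (A : Set X) (hA : MeasurableSet A) :
    P a A ≤ P b A + ENNReal.ofReal ε ∧ P b A ≤ P a A + ENNReal.ofReal ε := by
  have hb : BddAbove (Set.range fun E : {E : Set X // MeasurableSet E} =>
      |(P a E.1).toReal - (P b E.1).toReal|) := by
    refine ⟨1, ?_⟩
    rintro _ ⟨E, rfl⟩
    have h1 : (P a E.1).toReal ≤ 1 := measureReal_le_one
    have h2 : (P b E.1).toReal ≤ 1 := measureReal_le_one
    have h3 : 0 ≤ (P a E.1).toReal := ENNReal.toReal_nonneg
    have h4 : 0 ≤ (P b E.1).toReal := ENNReal.toReal_nonneg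
    simp only [abs_le]; constructor <;> linarith
  have h1 : |(P a A).toReal - (P b A).toReal| < ε := (le_ciSup hb ⟨A, hA⟩).trans_lt h
  have hε : 0 ≤ ε := (abs_nonneg _).trans h1.le
  rw [abs_lt] at h1
  constructor
  · rw [← ENNReal.ofReal_toReal (measure_ne_top (P a) A),
      ← ENNReal.ofReal_toReal (measure_ne_top (P b) A),
      ← ENNReal.ofReal_add ENNReal.toReal_nonneg hε]
    exact ENNReal.ofReal_le_ofReal (by linarith)
  · rw [← ENNReal.ofReal_toReal (measure_ne_top (P a) A),
      ← ENNReal.ofReal_toReal (measure_ne_top (P b) A),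
      ← ENNReal.ofReal_add ENNReal.toReal_nonneg hε]
    exact ENNReal.ofReal_le_ofReal (by linarith)

/-- The common conditional probability for a finite dominating measure. -/
theorem aux_kappa {X : Type u} [mX : MeasurableSpace X] {T' : Type w} [mT : MeasurableSpace T']
    (ν : Measure X) [IsFiniteMeasure ν] (T : X → T') (hT : Measurable T)
    (E : Set X) (hE : MeasurableSet E) :
    ∃ κ : T' → ℝ, Measurable κ ∧ (∀ t, 0 ≤ κ t) ∧ (∀ t, κ t ≤ 1) ∧
      ∀ φ : T' → ENNReal, Measurable φ →
        ∫⁻ x, φ (T x) * ENNReal.ofReal (κ (T x)) ∂ν = ∫⁻ x in E, φ (T x) ∂ν := by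
  set α := (ν.restrict E).map T
  set β := ν.map T
  have hle : α ≤ β := Measure.map_mono Measure.restrict_le_self hT
  have hα : β.withDensity (α.rnDeriv β) = α :=
    Measure.withDensity_rnDeriv_eq _ _ hle.absolutelyContinuous
  refine ⟨fun t => (min (α.rnDeriv β t) 1).toReal,
    ((Measure.measurable_rnDeriv α β).min measurable_const).ennreal_toReal,
    fun t => ENNReal.toReal_nonneg, fun t => ENNReal.toReal_le_of_le_ofReal zero_le_one (by simp), ?_⟩
  intro φ hφ
  have hκ : Measurable fun t => ENNReal.ofReal (min (α.rnDeriv β t) 1).toReal :=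
    ((Measure.measurable_rnDeriv α β).min measurable_const).ennreal_toReal.ennreal_ofReal
  calc ∫⁻ x, φ (T x) * ENNReal.ofReal (min (α.rnDeriv β (T x)) 1).toReal ∂ν
      = ∫⁻ t, φ t * ENNReal.ofReal (min (α.rnDeriv β t) 1).toReal ∂β :=
        (lintegral_map (hφ.mul hκ) hT).symm
    _ = ∫⁻ t, (α.rnDeriv β * φ) t ∂β := by
        refine lintegral_congr_ae ?_
        filter_upwards [Measure.rnDeriv_le_one_of_le hle] with t ht
        have ht' : α.rnDeriv β t ≤ 1 := ht
        rw [min_eq_left ht', ENNReal.ofReal_toReal (ht'.trans_lt ENNReal.one_lt_top).ne]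
        simp [mul_comm]
    _ = ∫⁻ t, φ t ∂α := by
        rw [← lintegral_withDensity_eq_lintegral_mul _ (Measure.measurable_rnDeriv α β) hφ, hα]
    _ = _ := lintegral_map hφ hT

/-- A finite dominating measure with densities factoring through `T`. -/
theorem aux_dom {X : Type u} [mX : MeasurableSpace X] {Θ : Type v}
    (P : Θ → Measure X) (hP : ∀ θ, IsProbabilityMeasure (P θ))
    (μ : Measure X)
    (hX : IsAnalyticBorel X)
    {T' : Type w} [mT : MeasurableSpace T']
    (hTcg : MeasurableSpace.CountablyGenerated T')
    (hTsing : MeasurableSingletonClass T')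
    (T : X → T') (hT : Measurable T)
    (f : Θ → X → ℝ) (hf : ∀ θ, IsDensity (P θ) μ (f θ))
    (Θ₀ : Set Θ) (hcount : Θ₀.Countable)
    (hD : ∀ x y : X, T x = T y → y ∈ DSet f x Θ₀) :
    ∃ ν : Measure X, IsFiniteMeasure ν ∧ ∀ θ ∈ Θ₀, ∃ ρ : T' → ENNReal, Measurable ρ ∧
      P θ = ν.withDensity (ρ ∘ T) := by
  have := hcount.to_subtype
  obtain ⟨c, hc0, hc⟩ := ENNReal.exists_pos_sum_of_countable' one_ne_zero Θ₀
  set F : Θ → X → ENNReal := fun θ x => ENNReal.ofReal (f θ x) with hF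
  have hFm : ∀ θ, Measurable (F θ) := fun θ => (hf θ).1.ennreal_ofReal
  set g : X → ENNReal := fun x => ∑' i : Θ₀, c i * F i x with hg
  have hgm : Measurable g := Measurable.ennreal_tsum fun i => (hFm i).const_mul _
  have hint : ∫⁻ x, g x ∂μ < ⊤ := by
    have : ∫⁻ x, g x ∂μ = ∑' i : Θ₀, c i := by
      rw [hg, lintegral_tsum fun i : Θ₀ => ((hFm i).const_mul (c i)).aemeasurable]
      congr 1; ext i
      rw [lintegral_const_mul _ (hFm i)]
      have : ∫⁻ x, F i x ∂μ = 1 := by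
        have h1 := (hP i).measure_univ
        rw [(hf i).2.2, withDensity_apply _ MeasurableSet.univ, Measure.restrict_univ] at h1
        exact h1
      rw [this, mul_one]
    rw [this]; exact hc.trans ENNReal.one_lt_top
  refine ⟨μ.withDensity g, isFiniteMeasure_withDensity hint.ne, fun θ hθ => ?_⟩
  obtain ⟨ρ, hρ, hρe⟩ := aux_factor hX hTcg hTsing T hT (fun x => F θ x / g x)
    ((hFm θ).div hgm) (by
      intro x y hxy
      obtain ⟨h, hh, hfy⟩ := hD x y hxy
      have hFy : ∀ θ ∈ Θ₀, F θ y = F θ x * ENNReal.ofReal h := fun θ hθ => by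
        simp only [hF]
        rw [hfy θ hθ, ENNReal.ofReal_mul ((hf θ).2.1 x)]
      have hgy : g y = g x * ENNReal.ofReal h := by
        simp only [hg]
        rw [← ENNReal.tsum_mul_right]
        congr 1; ext i
        rw [hFy i i.2, mul_assoc]
      rw [hFy θ hθ, hgy]
      exact (ENNReal.mul_div_mul_right _ _ (by simpa using hh) ENNReal.ofReal_ne_top).symm)
  refine ⟨ρ, hρ, ?_⟩
  rw [← hρe, show (fun x => F θ x / g x) = F θ / g from rfl, ← withDensity_mul _ hgm ((hFm θ).div hgm), (hf θ).2.2]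
  refine withDensity_congr_ae ?_
  filter_upwards [ae_lt_top hgm hint.ne] with x hx
  simp only [Pi.mul_apply, Pi.div_apply]
  change F θ x = _
  by_cases h0 : g x = 0
  · have := ENNReal.tsum_eq_zero.1 h0 ⟨θ, hθ⟩
    rw [mul_eq_zero] at this
    rw [this.resolve_left (hc0 _).ne', h0]; simp
  · exact (ENNReal.mul_div_cancel h0 hx.ne).symm

/-- Corollary 4.2. -/
theorem cor_4_2
    {X : Type u} [mX : MeasurableSpace X] {Θ : Type v} [Nonempty Θ]
    (P : Θ → Measure X) (hP : ∀ θ, IsProbabilityMeasure (P θ))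
    (μ : Measure X) (hμ : SigmaFinite μ) (hac : ∀ θ, P θ ≪ μ)
    (hX : IsAnalyticBorel X)
    {T' : Type w} [mT : MeasurableSpace T']
    (hTcg : MeasurableSpace.CountablyGenerated T')
    (hTsing : MeasurableSingletonClass T')
    (T : X → T') (hT : Measurable T)
    (f : Θ → X → ℝ) (hf : ∀ θ, IsDensity (P θ) μ (f θ))
    (Θ₀ : Set Θ) (hne : Θ₀.Nonempty) (hcount : Θ₀.Countable)
    (hdense : ∀ θ : Θ, ∀ ε : ℝ, 0 < ε → ∃ θ₀ ∈ Θ₀, tvDist P θ θ₀ < ε)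
    (hD : ∀ x y : X, T x = T y → y ∈ DSet f x Θ₀) :
    IsSufficientStat P T := by
  refine ⟨hT, fun E hE => ?_⟩
  obtain ⟨ν, hν, hρ⟩ := aux_dom P hP μ hX hTcg hTsing T hT f hf Θ₀ hcount hD
  obtain ⟨κ, hκ, hκ0, hκ1, hκi⟩ := aux_kappa ν T hT E hE
  have hκT : Measurable fun x => ENNReal.ofReal (κ (T x)) := (hκ.comp hT).ennreal_ofReal
  have key0 : ∀ θ ∈ Θ₀, ∀ S : Set T', MeasurableSet S →
      ∫⁻ x, ENNReal.ofReal ((T ⁻¹' S).indicator (fun x => κ (T x)) x) ∂(P θ)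
        = P θ (E ∩ T ⁻¹' S) := by
    intro θ hθ S hS
    obtain ⟨ρ, hρm, hPe⟩ := hρ θ hθ
    have hTS : MeasurableSet (T ⁻¹' S) := hT hS
    have e1 : (fun x => ENNReal.ofReal ((T ⁻¹' S).indicator (fun x => κ (T x)) x))
        = (T ⁻¹' S).indicator (fun x => ENNReal.ofReal (κ (T x))) := by
      ext x; by_cases hx : x ∈ T ⁻¹' S <;> simp [hx]
    rw [e1, hPe, lintegral_withDensity_eq_lintegral_mul _ (hρm.comp hT) (hκT.indicator hTS),
      withDensity_apply _ (hE.inter hTS)]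
    have := hκi (S.indicator ρ) (hρm.indicator hS)
    have e2 : ∀ x, S.indicator ρ (T x) = (T ⁻¹' S).indicator (ρ ∘ T) x := fun x => rfl
    rw [Set.inter_comm, ← Measure.restrict_restrict hTS, ← lintegral_indicator hTS]
    simp only [e2] at this
    rw [← this]
    congr 1; ext x
    by_cases hx : x ∈ T ⁻¹' S <;> simp [Set.indicator, hx]
  have key : ∀ θ, ∀ S : Set T', MeasurableSet S →
      ∫⁻ x, ENNReal.ofReal ((T ⁻¹' S).indicator (fun x => κ (T x)) x) ∂(P θ)
        = P θ (E ∩ T ⁻¹' S) := by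
    intro θ S hS
    have hTS : MeasurableSet (T ⁻¹' S) := hT hS
    have hm : Measurable ((T ⁻¹' S).indicator (fun x => κ (T x))) :=
      (hκ.comp hT).indicator hTS
    have h0 : ∀ x, 0 ≤ (T ⁻¹' S).indicator (fun x => κ (T x)) x :=
      fun x => Set.indicator_nonneg (fun x _ => hκ0 _) x
    have h1 : ∀ x, (T ⁻¹' S).indicator (fun x => κ (T x)) x ≤ 1 :=
      fun x => Set.indicator_le' (fun x _ => hκ1 _) (fun x _ => zero_le_one) x
    have hd : ∀ ε : NNReal, 0 < ε → ∃ θ₀ ∈ Θ₀,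
        ∀ A, MeasurableSet A → P θ A ≤ P θ₀ A + (ε / 2 : NNReal) ∧
          P θ₀ A ≤ P θ A + (ε / 2 : NNReal) := by
      intro ε hε
      obtain ⟨θ₀, hθ₀, h⟩ := hdense θ ((ε / 2 : NNReal) : ℝ) (by positivity)
      refine ⟨θ₀, hθ₀, fun A hA => ?_⟩
      simpa only [ENNReal.ofReal_coe_nnreal] using aux_tv P hP θ θ₀ _ h A hA
    have hhalf : ∀ ε : NNReal, ((ε / 2 : NNReal) : ENNReal) + (ε / 2 : NNReal) = ε := fun ε => by
      rw [← ENNReal.coe_add, add_halves]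
    apply le_antisymm
    · refine ENNReal.le_of_forall_pos_le_add fun ε hε _ => ?_
      obtain ⟨θ₀, hθ₀, h⟩ := hd ε hε
      refine (aux_cmp _ _ _ (fun A hA => (h A hA).1) _ hm h0 h1).trans ?_
      rw [key0 θ₀ hθ₀ S hS, ← hhalf ε, ← add_assoc]
      gcongr
      exact (h _ (hE.inter hTS)).2
    · refine ENNReal.le_of_forall_pos_le_add fun ε hε _ => ?_
      obtain ⟨θ₀, hθ₀, h⟩ := hd ε hε
      refine (h _ (hE.inter hTS)).1.trans ?_
      rw [← key0 θ₀ hθ₀ S hS, ← hhalf ε, ← add_assoc]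
      gcongr
      exact aux_cmp _ _ _ (fun A hA => (h A hA).2) _ hm h0 h1
  refine ⟨κ, hκ, fun θ => ?_⟩
  have hPθ := hP θ
  have hκint : Integrable (κ ∘ T) (P θ) := by
    refine Integrable.of_bound (hκ.comp hT).aestronglyMeasurable 1
      (Filter.Eventually.of_forall fun x => ?_)
    rw [Real.norm_eq_abs, Function.comp_apply, abs_of_nonneg (hκ0 _)]
    exact hκ1 _
  refine (ae_eq_condExp_of_forall_setIntegral_eq hT.comap_le
    ((integrable_const (1 : ℝ)).indicator hE) (fun s _ _ => hκint.integrableOn) ?_ ?_).symm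
  · rintro s ⟨S, hS, rfl⟩ -
    have hTS : MeasurableSet (T ⁻¹' S) := hT hS
    rw [← integral_indicator hTS, setIntegral_indicator hE]
    rw [show (κ ∘ T) = fun x => κ (T x) from rfl, integral_eq_lintegral_of_nonneg_ae
      (Filter.Eventually.of_forall fun x => Set.indicator_nonneg (fun x _ => hκ0 _) x)
      ((hκ.comp hT).indicator hTS).aestronglyMeasurable]
    have := key θ S hS
    rw [this, Set.inter_comm]
    simp [Measure.real]
  · exact (hκ.comp (comap_measurable T)).aestronglyMeasurable
end
end

section
/- Nonexistence claim from Counterexample 3.1. Let n ≥ 2 and let λⁿ denote the Lebesgue measure on ℝⁿ. There is no Borel measurable function u : ℝ → ℝⁿ such that (x₁,…,xₙ) = u(x₁ + ⋯ + xₙ) for λⁿ-almost every (x₁,…,xₙ) ∈ ℝⁿ. (Equivalently, the set A := {x ∈ ℝⁿ : u(Σ_{i=1}^n x_i) = x} satisfies λⁿ(A) = 0 for every Borel measurable u : ℝ → ℝⁿ; the proof uses that if λⁿ(A) > 0 then by the Steinhaus theorem A − A contains an open ball centered at 0, whereas A − A meets the hyperplane {x : Σ x_i = 0} only at 0.) 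-/
open MeasureTheory

noncomputable section

universe u v w u'

/-- Nonexistence claim from Counterexample 3.1: for `n ≥ 2` there is no Borel measurable
`u : ℝ → ℝⁿ` with `u (x₁ + ⋯ + xₙ) = x` for Lebesgue-a.e. `x ∈ ℝⁿ`. -/
theorem counterexample_3_1_no_factorization
    (n : ℕ) (hn : 2 ≤ n) (u : ℝ → (Fin n → ℝ)) (hu : Measurable u) :
    ¬ (∀ᵐ x : Fin n → ℝ ∂volume, u (∑ i, x i) = x) := by
  intro h
  let i₀ : Fin n := ⟨0, by omega⟩
  let i₁ : Fin n := ⟨1, by omega⟩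
  have hne : i₁ ≠ i₀ := by simp [i₀, i₁, Fin.ext_iff]
  let v : Fin n → ℝ := Pi.single i₀ 1 - Pi.single i₁ 1
  have hv : ∑ i, v i = 0 := by simp [v, Finset.sum_sub_distrib]
  have hv0 : v i₀ = 1 := by simp [v, hne.symm]
  have h2 : ∀ᵐ x : Fin n → ℝ ∂volume, u (∑ i, (x + v) i) = x + v :=
    (measurePreserving_add_right (volume : Measure (Fin n → ℝ)) v).quasiMeasurePreserving.ae h
  obtain ⟨x, hx1, hx2⟩ := (h.and h2).exists
  have hs : ∑ i, (x + v) i = ∑ i, x i := by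
    simp only [Pi.add_apply, Finset.sum_add_distrib, hv, add_zero]
  rw [hs, hx1] at hx2
  have := congrFun hx2 i₀
  rw [Pi.add_apply, hv0] at this
  linarith
end
end
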